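/- Let d ≥ 1, let (d−1)π/2 ≤ θ₀ < dπ/2 and r > 0 satisfy r·tan(θ₀/d) ≤ 1, and let A : [0,∞) → Λ^d be a C¹ path of positive definite symmetric matrices with Θ(A(0)/r) = θ₀ and Ȧ(t) + A(t)² ≥ Id for all t (in the sense of symmetric matrices). Then for all t ≥ 0, Θ(A(t)/r) ≥ d·arctan(tanh(t₀+t)/r), where t₀ := arctanh(r·tan(θ₀/d)). -/

import Mathlib

open Real

/-- The special lagrangian angle of a real symmetric matrix: the sum of the arctangents of its
eigenvalues. -/
noncomputable def slAngle {d : ℕ} (A : Matrix (Fin d) (Fin d) ℝ) : ℝ :=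
  if h : A.IsHermitian then ∑ i, Real.arctan (h.eigenvalues i) else 0

/-- The inverse hyperbolic tangent, defined on (−1, 1). -/
noncomputable def arctanh (x : ℝ) : ℝ := Real.log ((1 + x) / (1 - x)) / 2

/-!
With `X = A / r`, the derivative of `Θ(X) = tr (arctan X)` is `tr ((1 + X²)⁻¹ X')`, and
`A' + A² ≥ 1` bounds it below by `r⁻¹ ((1 + r²) tr (1 + X²)⁻¹ - d r²)`. The comparison function
`d * arctan (w / r)` with `w' = 1 - w²` satisfies the same relation with equality when
`tr (1 + X²)⁻¹` is replaced by `d (1 + (w / r)²)⁻¹`.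

The two traces are compared through `1 / (1 + tan² θ) = (1 - cos (π - 2θ)) / 2`. For a phase
`Θ ≥ (d - 1) π / 2` the angles `π - 2θᵢ` have sum at most `π`, and on such tuples the cosine still
satisfies Jensen's inequality, even though one angle may exceed `π / 2`. Below the comparison phase
Jensen's inequality persists up to an error bounded by the gap between the phases, as `cos` is
`1`-Lipschitz, and Grönwall's inequality absorbs such an error.
-/

open Matrix
open scoped NNReal

theorem cos_add_cos_le_two_mul_cos {x y : ℝ} (h : |x + y| ≤ π) :
    cos x + cos y ≤ 2 * cos ((x + y) / 2) := by
  have hcos : 0 ≤ cos ((x + y) / 2) := by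
    obtain ⟨h₁, h₂⟩ := abs_le.1 h
    exact cos_nonneg_of_mem_Icc ⟨by linarith, by linarith⟩
  rw [cos_add_cos]
  exact mul_le_of_le_one_right (by positivity) (cos_le_one _)

theorem cos_add_nat_mul_cos_le {n : ℕ} {x y : ℝ} (hx : 0 ≤ x) (hy : 0 ≤ y)
    (h : x + n * y ≤ π) :
    cos x + n * cos y ≤ (n + 1) * cos ((x + n * y) / (n + 1)) := by
  match n with
  | 0 => simp
  | 1 =>
    have := cos_add_cos_le_two_mul_cos (x := x) (y := y)
      (by rw [abs_of_nonneg (by positivity)]; simpa using h)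
    norm_num
    exact this
  | k + 2 =>
    push_cast at h ⊢
    have hky : 0 ≤ k * y := by positivity
    have hpair : cos x + cos y ≤ 2 * cos ((x + y) / 2) :=
      cos_add_cos_le_two_mul_cos (by rw [abs_of_nonneg (by positivity)]; linarith)
    have hmid : (x + y) / 2 ∈ Set.Icc (-(π / 2)) (π / 2) := ⟨by linarith, by linarith⟩
    have hy' : y ∈ Set.Icc (-(π / 2)) (π / 2) := ⟨by linarith, by linarith⟩
    have hconc := strictConcaveOn_cos_Icc.concaveOn.2 hmid hy'
      (by positivity : (0 : ℝ) ≤ 2 / (k + 3)) (by positivity : (0 : ℝ) ≤ (k + 1) / (k + 3))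
      (by field_simp; ring)
    simp only [smul_eq_mul] at hconc
    have hmean : 2 / (k + 3) * ((x + y) / 2) + (k + 1) / (k + 3) * y
        = (x + (k + 2) * y) / (k + 2 + 1) := by
      field_simp; ring
    rw [hmean] at hconc
    calc cos x + (k + 2) * cos y ≤ 2 * cos ((x + y) / 2) + (k + 1) * cos y := by linarith
      _ = (k + 2 + 1) * (2 / (k + 3) * cos ((x + y) / 2) + (k + 1) / (k + 3) * cos y) := by
        field_simp; ring
      _ ≤ (k + 2 + 1) * cos ((x + (k + 2) * y) / (k + 2 + 1)) := by gcongr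

section SumCos

variable {ι : Type*} {s : Finset ι} {x : ι → ℝ}

-- The points may leave the interval of concavity `[-π/2, π/2]`, but at most one of them does.
theorem sum_cos_le_card_mul_cos (hx : ∀ i ∈ s, 0 ≤ x i) (h : ∑ i ∈ s, x i ≤ π) :
    ∑ i ∈ s, cos (x i) ≤ s.card * cos ((∑ i ∈ s, x i) / s.card) := by
  classical
  induction s using Finset.induction_on with
  | empty => simp
  | insert a s ha ih =>
    obtain ⟨hxa, hxs⟩ := Finset.forall_mem_insert .. |>.1 hx
    rw [Finset.sum_insert ha] at h
    have hmean : s.card * ((∑ i ∈ s, x i) / s.card) = ∑ i ∈ s, x i :=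
      mul_div_cancel_of_imp' fun h0 => by simp_all
    have hsum := Finset.sum_nonneg hxs
    have htwo := cos_add_nat_mul_cos_le (n := s.card) hxa
      (div_nonneg hsum s.card.cast_nonneg) (by rwa [hmean])
    rw [hmean] at htwo
    rw [Finset.sum_insert ha, Finset.sum_insert ha, Finset.card_insert_of_notMem ha]
    push_cast
    linarith [ih hxs (by linarith)]

theorem sum_cos_le_card_mul_cos_add (hx : ∀ i ∈ s, 0 ≤ x i) {v : ℝ} (hv : 0 < v)
    (hvπ : s.card * v ≤ π) (hvx : s.card * v ≤ ∑ i ∈ s, x i) :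
    ∑ i ∈ s, cos (x i) ≤ s.card * cos v + (∑ i ∈ s, x i - s.card * v) := by
  obtain rfl | hs := s.eq_empty_or_nonempty
  · simp
  have hcard : (0 : ℝ) < s.card := by exact_mod_cast hs.card_pos
  set S := ∑ i ∈ s, x i
  have hS : 0 < S := (mul_pos hcard hv).trans_le hvx
  -- Scaling the points down by `k` brings their sum to `s.card * v`, where Jensen applies.
  set k := s.card * v / S with hk
  have hk0 : 0 ≤ k := by positivity
  have hk1 : k ≤ 1 := (div_le_one hS).2 hvx
  have hsum : ∑ i ∈ s, k * x i = s.card * v := by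
    rw [← Finset.mul_sum, hk, div_mul_cancel₀ _ hS.ne']
  have hjensen : ∑ i ∈ s, cos (k * x i) ≤ s.card * cos v := by
    have := sum_cos_le_card_mul_cos (fun i hi => mul_nonneg hk0 (hx i hi)) (hsum.trans_le hvπ)
    rwa [hsum, mul_div_cancel_left₀ _ hcard.ne'] at this
  have hlip : ∑ i ∈ s, (cos (x i) - cos (k * x i)) ≤ ∑ i ∈ s, (x i - k * x i) := by
    refine Finset.sum_le_sum fun i hi => ?_
    have hle : k * x i ≤ x i := mul_le_of_le_one_left (hx i hi) hk1
    exact (le_abs_self _).trans <| (abs_cos_sub_cos_le _ _).trans_eq <|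
      abs_of_nonneg (sub_nonneg.2 hle)
  rw [Finset.sum_sub_distrib, Finset.sum_sub_distrib, hsum] at hlip
  linarith

theorem card_div_one_add_sq_sub_sum_le {y : ℝ}
    (hy : ((s.card : ℝ) - 1) * π / 2 ≤ s.card * arctan y)
    (hxy : ∑ i ∈ s, arctan (x i) ≤ s.card * arctan y) :
    s.card * (1 / (1 + y ^ 2)) - ∑ i ∈ s, 1 / (1 + x i ^ 2)
      ≤ s.card * arctan y - ∑ i ∈ s, arctan (x i) := by
  have hdouble (z : ℝ) : 1 / (1 + z ^ 2) = (1 - cos (π - 2 * arctan z)) / 2 := by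
    rw [← cos_sq_arctan, cos_sq, cos_pi_sub]; ring
  have hsum : ∑ i ∈ s, (π - 2 * arctan (x i)) = s.card * π - 2 * ∑ i ∈ s, arctan (x i) := by
    rw [Finset.sum_sub_distrib, ← Finset.mul_sum, Finset.sum_const, nsmul_eq_mul]
  have hcos := sum_cos_le_card_mul_cos_add (s := s) (x := fun i => π - 2 * arctan (x i))
    (fun i _ => by linarith [arctan_lt_pi_div_two (x i)])
    (v := π - 2 * arctan y) (by linarith [arctan_lt_pi_div_two y])
    (by linarith) (by rw [hsum]; linarith)
  have hsq : ∑ i ∈ s, 1 / (1 + x i ^ 2)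
      = (s.card - ∑ i ∈ s, cos (π - 2 * arctan (x i))) / 2 := by
    simp only [hdouble, ← Finset.sum_div, Finset.sum_sub_distrib, Finset.sum_const, nsmul_eq_mul,
      mul_one]
  rw [hsum] at hcos
  rw [hsq, hdouble]
  linarith

end SumCos

theorem abs_sub_sub_deriv_mul_le_of_lipschitzWith {f f' : ℝ → ℝ} {K : ℝ≥0}
    (hf : ∀ x, HasDerivAt f (f' x) x) (hf' : LipschitzWith K f') (x y : ℝ) :
    |f y - f x - f' x * (y - x)| ≤ K * (y - x) ^ 2 := by
  have hderiv (z : ℝ) : HasDerivAt (fun z => f z - f' x * z) (f' z - f' x) z := by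
    simpa using (hf z).fun_sub ((hasDerivAt_id z).const_mul (f' x))
  have hbound : ∀ z ∈ Set.uIcc x y, ‖f' z - f' x‖ ≤ K * |y - x| := fun z hz =>
    (hf'.norm_sub_le z x).trans <| by gcongr; exact Set.abs_sub_left_of_mem_uIcc hz
  have hmvt := (convex_uIcc x y).norm_image_sub_le_of_norm_hasDerivWithin_le
    (fun z _ => (hderiv z).hasDerivWithinAt) hbound Set.left_mem_uIcc Set.right_mem_uIcc
  rw [Real.norm_eq_abs, Real.norm_eq_abs, mul_assoc, abs_mul_abs_self, ← sq] at hmvt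
  convert hmvt using 2
  ring

theorem lipschitzWith_one_div_one_add_sq : LipschitzWith 1 fun x : ℝ => 1 / (1 + x ^ 2) := by
  refine LipschitzWith.of_dist_le_mul fun x y => ?_
  have hfactor : 1 / (1 + x ^ 2) - 1 / (1 + y ^ 2)
      = (x - y) * (-(x + y) / ((1 + x ^ 2) * (1 + y ^ 2))) := by
    field_simp; ring
  have hxy : |x + y| ≤ (1 + x ^ 2) * (1 + y ^ 2) :=
    abs_le.2 ⟨by nlinarith [sq_nonneg (x + 1), sq_nonneg (y + 1), sq_nonneg (x * y)],
      by nlinarith [sq_nonneg (x - 1), sq_nonneg (y - 1), sq_nonneg (x * y)]⟩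
  rw [NNReal.coe_one, one_mul, Real.dist_eq, Real.dist_eq, hfactor, abs_mul]
  refine mul_le_of_le_one_right (abs_nonneg _) ?_
  rw [abs_div, abs_neg, abs_of_pos (by positivity : 0 < (1 + x ^ 2) * (1 + y ^ 2))]
  exact div_le_one_of_le₀ hxy (by positivity)

section TraceCfc

variable {n : Type*} [Fintype n] [DecidableEq n] {X Y P : Matrix n n ℝ}

-- The weights are the squared inner products of the two eigenbases.
theorem exists_trace_cfc_mul_cfc_eq_sum (hX : X.IsHermitian) (hY : Y.IsHermitian) :
    ∃ W : n → n → ℝ, (∀ i j, 0 ≤ W i j) ∧ ∀ f g : ℝ → ℝ, (cfc f X * cfc g Y).trace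
      = ∑ i, ∑ j, W i j * (f (hX.eigenvalues i) * g (hY.eigenvalues j)) := by
  let U : Matrix n n ℝ := hX.eigenvectorUnitary
  let V : Matrix n n ℝ := hY.eigenvectorUnitary
  let Q := star U * V
  have hQ : star Q = star V * U := by rw [star_mul, star_star]
  refine ⟨fun i j => Q i j ^ 2, fun i j => sq_nonneg _, fun f g => ?_⟩
  calc (cfc f X * cfc g Y).trace
      = (diagonal (f ∘ hX.eigenvalues) * Q * (diagonal (g ∘ hY.eigenvalues) * star Q)).trace := by
        rw [hX.cfc_eq, hY.cfc_eq, IsHermitian.cfc, IsHermitian.cfc, Unitary.conjStarAlgAut_apply,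
          Unitary.conjStarAlgAut_apply, hQ, mul_assoc, mul_assoc, trace_mul_comm]
        simp only [mul_assoc, Q]
        rfl
    _ = ∑ i, ∑ j, Q i j ^ 2 * (f (hX.eigenvalues i) * g (hY.eigenvalues j)) := by
        simp only [trace, diag_apply, Matrix.mul_apply (M := _ * Q), diagonal_mul, star_apply,
          star_trivial, Function.comp_apply]
        refine Finset.sum_congr rfl fun i _ => Finset.sum_congr rfl fun j _ => ?_
        ring

theorem trace_cfc (hX : X.IsHermitian) (f : ℝ → ℝ) :
    (cfc f X).trace = ∑ i, f (hX.eigenvalues i) := by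
  rw [hX.cfc_eq, IsHermitian.cfc, Unitary.conjStarAlgAut_apply, trace_mul_comm, ← mul_assoc,
    Unitary.coe_star_mul_self, one_mul, trace_diagonal]
  rfl

theorem trace_cfc_mul_nonneg (hX : X.IsHermitian) {g : ℝ → ℝ} (hg : ∀ x, 0 ≤ g x)
    (hP : P.PosSemidef) : 0 ≤ (cfc g X * P).trace := by
  obtain ⟨W, hW, htrace⟩ := exists_trace_cfc_mul_cfc_eq_sum hX hP.isHermitian
  rw [← cfc_id ℝ P hP.isHermitian.isSelfAdjoint, htrace]
  exact Finset.sum_nonneg fun i _ => Finset.sum_nonneg fun j _ =>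
    mul_nonneg (hW i j) (mul_nonneg (hg _) (hP.eigenvalues_nonneg j))

-- As in Klein's inequality, the scalar Taylor estimate is averaged over pairs of eigenvalues.
theorem abs_trace_cfc_sub_sub_le (hX : X.IsHermitian) (hY : Y.IsHermitian) {f f' : ℝ → ℝ} {K : ℝ}
    (hf : ∀ x y, |f y - f x - f' x * (y - x)| ≤ K * (y - x) ^ 2) :
    |(cfc f Y).trace - (cfc f X).trace - (cfc f' X * (Y - X)).trace|
      ≤ K * ((Y - X) * (Y - X)).trace := by
  obtain ⟨W, hW, htrace⟩ := exists_trace_cfc_mul_cfc_eq_sum hX hY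
  have hcont (g : ℝ → ℝ) {Z : Matrix n n ℝ} : ContinuousOn g (spectrum ℝ Z) :=
    finite_real_spectrum.continuousOn g
  have hXf (g : ℝ → ℝ) := htrace g 1
  have hYf (g : ℝ → ℝ) := htrace 1 g
  have hXY (g : ℝ → ℝ) := htrace g id
  simp only [cfc_one ℝ X hX.isSelfAdjoint, cfc_one ℝ Y hY.isSelfAdjoint,
    cfc_id ℝ Y hY.isSelfAdjoint, mul_one, one_mul, Pi.one_apply, id] at hXf hYf hXY
  have hXX : cfc f' X * X = cfc (fun x => f' x * x) X := by
    rw [cfc_mul f' (fun x => x) X (hcont _) (hcont _), cfc_id' ℝ X hX.isSelfAdjoint]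
  have hlin : (cfc f Y).trace - (cfc f X).trace - (cfc f' X * (Y - X)).trace = ∑ i, ∑ j,
      W i j * (f (hY.eigenvalues j) - f (hX.eigenvalues i)
        - f' (hX.eigenvalues i) * (hY.eigenvalues j - hX.eigenvalues i)) := by
    rw [mul_sub, trace_sub, hXX, hXf, hYf, hXf, hXY]
    simp only [mul_sub, Finset.sum_sub_distrib]
  have hquad : ((Y - X) * (Y - X)).trace
      = ∑ i, ∑ j, W i j * (hY.eigenvalues j - hX.eigenvalues i) ^ 2 := by
    have hsq {Z : Matrix n n ℝ} (hZ : Z.IsHermitian) : Z * Z = cfc (fun x : ℝ => x ^ 2) Z := by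
      rw [cfc_pow_id Z 2 hZ.isSelfAdjoint, sq]
    have hcross := hXY id
    rw [cfc_id ℝ X hX.isSelfAdjoint] at hcross
    calc ((Y - X) * (Y - X)).trace = (Y * Y).trace - 2 * (X * Y).trace + (X * X).trace := by
          rw [sub_mul, mul_sub, mul_sub, trace_sub, trace_sub, trace_sub, trace_mul_comm Y X]
          ring
      _ = _ := by
          rw [hsq hX, hsq hY, hXf, hYf, hcross]
          simp only [Finset.mul_sum, ← Finset.sum_sub_distrib, ← Finset.sum_add_distrib, id]
          refine Finset.sum_congr rfl fun i _ => Finset.sum_congr rfl fun j _ => ?_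
          ring
  rw [hlin, hquad, Finset.mul_sum]
  refine (Finset.abs_sum_le_sum_abs _ _).trans (Finset.sum_le_sum fun i _ => ?_)
  rw [Finset.mul_sum]
  refine (Finset.abs_sum_le_sum_abs _ _).trans (Finset.sum_le_sum fun j _ => ?_)
  rw [abs_mul, abs_of_nonneg (hW i j), mul_left_comm]
  exact mul_le_mul_of_nonneg_left (hf _ _) (hW i j)

theorem hasDerivWithinAt_trace_cfc {f f' : ℝ → ℝ} {K : ℝ≥0} (hf : ∀ x, HasDerivAt f (f' x) x)
    (hf' : LipschitzWith K f') {M : ℝ → Matrix n n ℝ} {M' : Matrix n n ℝ} {s : Set ℝ} {t : ℝ}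
    (hM : ∀ i j, HasDerivWithinAt (fun u => M u i j) (M' i j) s t)
    (hs : ∀ u ∈ s, (M u).IsHermitian) (ht : t ∈ s) :
    HasDerivWithinAt (fun u => (cfc f (M u)).trace) (cfc f' (M t) * M').trace s t := by
  have hsub (i j : n) : HasDerivWithinAt (fun u => (M u - M t) i j) (M' i j) s t :=
    (hM i j).sub_const _
  have hlin : HasDerivWithinAt (fun u => (cfc f' (M t) * (M u - M t)).trace)
      (cfc f' (M t) * M').trace s t := by
    simp only [trace, diag_apply, Matrix.mul_apply]
    exact .fun_sum fun i _ => .fun_sum fun j _ => (hsub j i).const_mul _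
  have hquad : HasDerivWithinAt (fun u => K * ((M u - M t) * (M u - M t)).trace) 0 s t := by
    simp only [trace, diag_apply, Matrix.mul_apply]
    simpa using (HasDerivWithinAt.fun_sum (u := Finset.univ) fun i _ =>
      .fun_sum (u := Finset.univ) fun j _ => (hsub i j).fun_mul (hsub j i)).const_mul (K : ℝ)
  rw [hasDerivWithinAt_iff_isLittleO] at hlin hquad ⊢
  simp only [sub_self, mul_zero, trace_zero, sub_zero, smul_zero] at hlin hquad
  have hrem : (fun u => (cfc f (M u)).trace - (cfc f (M t)).trace
      - (cfc f' (M t) * (M u - M t)).trace) =o[nhdsWithin t s] fun u => u - t := by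
    refine Asymptotics.IsBigO.trans_isLittleO (Asymptotics.IsBigO.of_bound 1 ?_) hquad
    filter_upwards [self_mem_nhdsWithin] with u hu
    rw [one_mul, Real.norm_eq_abs, Real.norm_eq_abs]
    exact (abs_trace_cfc_sub_sub_le (hs t ht) (hs u hu)
      (abs_sub_sub_deriv_mul_le_of_lipschitzWith hf hf')).trans (le_abs_self _)
  exact (hrem.add hlin).congr_left fun u => by ring

end TraceCfc

theorem slAngle_eq_trace_cfc_arctan {d : ℕ} {X : Matrix (Fin d) (Fin d) ℝ} (hX : X.IsHermitian) :
    slAngle X = (cfc arctan X).trace := by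
  rw [slAngle, dif_pos hX, trace_cfc hX]

theorem hasDerivWithinAt_slAngle {d : ℕ} {M : ℝ → Matrix (Fin d) (Fin d) ℝ}
    {M' : Matrix (Fin d) (Fin d) ℝ} {s : Set ℝ} {t : ℝ}
    (hM : ∀ i j, HasDerivWithinAt (fun u => M u i j) (M' i j) s t)
    (hs : ∀ u ∈ s, (M u).IsHermitian) (ht : t ∈ s) :
    HasDerivWithinAt (fun u => slAngle (M u))
      (cfc (fun x : ℝ => 1 / (1 + x ^ 2)) (M t) * M').trace s t :=
  (hasDerivWithinAt_trace_cfc hasDerivAt_arctan lipschitzWith_one_div_one_add_sq hM hs ht).congr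
    (fun u hu => slAngle_eq_trace_cfc_arctan (hs u hu)) (slAngle_eq_trace_cfc_arctan (hs t ht))

theorem card_div_one_add_sq_sub_trace_le {d : ℕ} {X : Matrix (Fin d) (Fin d) ℝ}
    (hX : X.IsHermitian) {y : ℝ} (hy : ((d : ℝ) - 1) * π / 2 ≤ d * arctan y)
    (hXy : slAngle X ≤ d * arctan y) :
    d * (1 / (1 + y ^ 2)) - (cfc (fun x : ℝ => 1 / (1 + x ^ 2)) X).trace
      ≤ d * arctan y - slAngle X := by
  rw [slAngle_eq_trace_cfc_arctan hX, trace_cfc hX] at hXy ⊢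
  rw [trace_cfc hX]
  simpa only [Finset.card_univ, Fintype.card_fin] using
    card_div_one_add_sq_sub_sum_le (s := Finset.univ) (x := hX.eigenvalues)
      (by simpa using hy) (by simpa using hXy)

theorem le_trace_cfc_mul_of_riccati {n : Type*} [Fintype n] [DecidableEq n] {r : ℝ} (hr : 0 < r)
    {A A' : Matrix n n ℝ} (hX : (r⁻¹ • A).IsHermitian) (hA' : (A' + A * A - 1).PosSemidef) :
    r⁻¹ * ((1 + r ^ 2) * (cfc (fun x : ℝ => 1 / (1 + x ^ 2)) (r⁻¹ • A)).trace
        - Fintype.card n * r ^ 2)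
      ≤ (cfc (fun x : ℝ => 1 / (1 + x ^ 2)) (r⁻¹ • A) * (r⁻¹ • A')).trace := by
  set X := r⁻¹ • A with hXA
  set g : ℝ → ℝ := fun x => 1 / (1 + x ^ 2)
  have hcont (f : ℝ → ℝ) : ContinuousOn f (spectrum ℝ X) := finite_real_spectrum.continuousOn f
  have hsplit : r⁻¹ • A' = r⁻¹ • (A' + A * A - 1) + cfc (fun x : ℝ => r⁻¹ - r * x ^ 2) X := by
    rw [cfc_sub (fun _ => r⁻¹) (fun x => r * x ^ 2) X (hcont _) (hcont _),
      cfc_const r⁻¹ X hX.isSelfAdjoint, cfc_const_mul r (fun x => x ^ 2) X (hcont _),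
      cfc_pow_id X 2 hX.isSelfAdjoint, hXA, Algebra.algebraMap_eq_smul_one, sq,
      smul_mul_smul_comm]
    match_scalars <;> field_simp <;> ring
  have hpsd : 0 ≤ (cfc g X * r⁻¹ • (A' + A * A - 1)).trace :=
    trace_cfc_mul_nonneg hX (fun x => by positivity) (hA'.smul (by positivity))
  have hscalar : (cfc g X * cfc (fun x : ℝ => r⁻¹ - r * x ^ 2) X).trace
      = r⁻¹ * ((1 + r ^ 2) * (cfc g X).trace - Fintype.card n * r ^ 2) := by
    have hpoint (x : ℝ) : g x * (r⁻¹ - r * x ^ 2) = r⁻¹ * ((1 + r ^ 2) * g x - r ^ 2) := by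
      simp only [g]; field_simp; ring
    rw [← cfc_mul g _ X (hcont _) (hcont _), trace_cfc hX, trace_cfc hX]
    simp only [hpoint, ← Finset.mul_sum, Finset.sum_sub_distrib, Finset.sum_const,
      Finset.card_univ, nsmul_eq_mul]
  rw [hsplit, mul_add, trace_add, hscalar]
  exact le_add_of_nonneg_left hpsd

-- Grönwall's argument, with barriers `ε * exp ((K + 1) * x)`: the differential inequality is only
-- needed where `g` meets them, hence only where `0 ≤ g`.
theorem nonpos_of_hasDerivWithinAt_le_mul {g g' : ℝ → ℝ} {a K : ℝ}
    (hg : ∀ x, a ≤ x → HasDerivWithinAt g (g' x) (Set.Ici a) x) (ha : g a ≤ 0)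
    (hbound : ∀ x, a ≤ x → 0 ≤ g x → g' x ≤ K * g x) {t : ℝ} (ht : a ≤ t) : g t ≤ 0 := by
  have hbarrier : ∀ ε > 0, g t ≤ ε * exp ((K + 1) * t) := by
    intro ε hε
    have hexp (x : ℝ) : HasDerivAt (fun x => ε * exp ((K + 1) * x))
        ((K + 1) * (ε * exp ((K + 1) * x))) x :=
      (((hasDerivAt_id' x).const_mul (K + 1)).exp.const_mul ε).congr_deriv (by ring)
    refine image_le_of_deriv_right_lt_deriv_boundary (f := g) (f' := g') (a := a) (b := t)
      (fun x hx => ((hg x hx.1).continuousWithinAt).mono Set.Icc_subset_Ici_self)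
      (fun x hx => (hg x hx.1).mono (Set.Ici_subset_Ici.2 hx.1))
      (ha.trans (by positivity)) hexp (fun x hx hgx => ?_) ⟨ht, le_rfl⟩
    have hpos : 0 < g x := by rw [hgx]; positivity
    rw [← hgx]
    linarith [hbound x hx.1 hpos.le]
  refine le_of_forall_pos_le_add fun δ hδ => ?_
  simpa using hbarrier (δ / exp ((K + 1) * t)) (by positivity)

section Comparison

variable {d : ℕ} {r : ℝ}

theorem deriv_gap_le_mul_gap (hr : 0 < r) {A A' : Matrix (Fin d) (Fin d) ℝ}
    (hX : (r⁻¹ • A).IsHermitian) (hA' : (A' + A * A - 1).PosSemidef) {y y' : ℝ}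
    (hy' : y' ≤ 1 - y ^ 2) (hy : ((d : ℝ) - 1) * π / 2 ≤ d * arctan (y / r))
    (hXy : slAngle (r⁻¹ • A) ≤ d * arctan (y / r)) :
    d * (1 / (1 + (y / r) ^ 2) * (y' / r))
        - (cfc (fun x : ℝ => 1 / (1 + x ^ 2)) (r⁻¹ • A) * (r⁻¹ • A')).trace
      ≤ r⁻¹ * (1 + r ^ 2) * (d * arctan (y / r) - slAngle (r⁻¹ • A)) := by
  have hric := le_trace_cfc_mul_of_riccati hr hX hA'
  rw [Fintype.card_fin] at hric
  set τ := (cfc (fun x : ℝ => 1 / (1 + x ^ 2)) (r⁻¹ • A)).trace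
  calc _ ≤ d * (1 / (1 + (y / r) ^ 2) * ((1 - y ^ 2) / r))
        - r⁻¹ * ((1 + r ^ 2) * τ - d * r ^ 2) := by gcongr
    _ = r⁻¹ * (1 + r ^ 2) * (d * (1 / (1 + (y / r) ^ 2)) - τ) := by field_simp; ring
    _ ≤ _ := by
      refine mul_le_mul_of_nonneg_left ?_ (by positivity)
      exact card_div_one_add_sq_sub_trace_le hX hy hXy

theorem mul_arctan_le_slAngle_of_riccati (hr : 0 < r) {A A' : ℝ → Matrix (Fin d) (Fin d) ℝ}
    (hderiv : ∀ t, 0 ≤ t → ∀ i j,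
      HasDerivWithinAt (fun u => A u i j) (A' t i j) (Set.Ici 0) t)
    (hsymm : ∀ t, 0 ≤ t → (A t).IsSymm)
    (hmono : ∀ t, 0 ≤ t → (A' t + A t * A t - 1).PosSemidef) {w w' : ℝ → ℝ}
    (hw : ∀ t, 0 ≤ t → HasDerivWithinAt w (w' t) (Set.Ici 0) t)
    (hw' : ∀ t, 0 ≤ t → w' t ≤ 1 - w t ^ 2)
    (hw_ge : ∀ t, 0 ≤ t → ((d : ℝ) - 1) * π / 2 ≤ d * arctan (w t / r))
    (hw_init : d * arctan (w 0 / r) ≤ slAngle (r⁻¹ • A 0)) {t : ℝ} (ht : 0 ≤ t) :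
    d * arctan (w t / r) ≤ slAngle (r⁻¹ • A t) := by
  have hX (t : ℝ) (ht : 0 ≤ t) : (r⁻¹ • A t).IsHermitian :=
    isHermitian_iff_isSymm.2 ((hsymm t ht).smul _)
  have hgap (x : ℝ) (hx : 0 ≤ x) :
      HasDerivWithinAt (fun u => d * arctan (w u / r) - slAngle (r⁻¹ • A u))
        (d * (1 / (1 + (w x / r) ^ 2) * (w' x / r))
          - (cfc (fun z : ℝ => 1 / (1 + z ^ 2)) (r⁻¹ • A x) * (r⁻¹ • A' x)).trace)
        (Set.Ici 0) x :=
    (((hw x hx).div_const r).arctan.const_mul (d : ℝ)).fun_sub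
      (hasDerivWithinAt_slAngle (fun i j => (hderiv x hx i j).const_mul r⁻¹) hX hx)
  exact sub_nonpos.1 <| nonpos_of_hasDerivWithinAt_le_mul hgap (sub_nonpos.2 hw_init)
    (fun x hx hpos => deriv_gap_le_mul_gap hr (hX x hx) (hmono x hx) (hw' x hx) (hw_ge x hx)
      (sub_nonneg.1 hpos)) ht

end Comparison

theorem hasDerivAt_tanh (x : ℝ) : HasDerivAt tanh (1 - tanh x ^ 2) x := by
  have hquot := (hasDerivAt_sinh x).fun_div (hasDerivAt_cosh x) (cosh_pos x).ne'
  simp only [← tanh_eq_sinh_div_cosh] at hquot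
  refine hquot.congr_deriv ?_
  have := (cosh_pos x).ne'
  rw [tanh_eq_sinh_div_cosh]
  field_simp

theorem monotone_tanh : Monotone tanh :=
  monotone_of_hasDerivAt_nonneg hasDerivAt_tanh fun x => sub_nonneg.2 (tanh_sq_lt_one x).le

theorem tanh_arctanh {x : ℝ} (hx : x ∈ Set.Ioo (-1) 1) : tanh (arctanh x) = x := by
  have h : arctanh x = artanh x := by
    rw [artanh_eq_half_log (Set.Ioo_subset_Icc_self hx), arctanh]; ring
  rw [h, tanh_artanh hx]

-- The case `c = 1` is separate because `arctanh 1` takes the junk value `0`.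
theorem exists_monotone_riccati_solution_ge_tanh {c : ℝ} (hc : -1 < c) (hc' : c ≤ 1) :
    ∃ w : ℝ → ℝ, w 0 = c ∧ (∀ t, HasDerivAt w (1 - w t ^ 2) t) ∧ Monotone w ∧
      ∀ t, tanh (arctanh c + t) ≤ w t := by
  obtain hlt | rfl := hc'.lt_or_eq
  · refine ⟨fun t => tanh (arctanh c + t), ?_, fun t => ?_, fun s t hst => ?_, fun t => le_rfl⟩
    · simpa only [add_zero] using tanh_arctanh ⟨hc, hlt⟩
    · exact (hasDerivAt_tanh _).comp_const_add _ t
    · exact monotone_tanh (by gcongr)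
  · exact ⟨fun _ => 1, rfl, fun t => by simpa using hasDerivAt_const t (1 : ℝ), monotone_const,
      fun t => (tanh_lt_one _).le⟩

theorem slAngle_evolution_lower_bound_general {d : ℕ} (hd : 1 ≤ d) {r θ₀ : ℝ} (hr : 0 < r)
    (hθ₁ : ((d : ℝ) - 1) * π / 2 ≤ θ₀) (hθ₂ : θ₀ < d * π / 2) (hrt : r * tan (θ₀ / d) ≤ 1)
    {A A' : ℝ → Matrix (Fin d) (Fin d) ℝ}
    (hderiv : ∀ t, 0 ≤ t → ∀ i j,
      HasDerivWithinAt (fun u => A u i j) (A' t i j) (Set.Ici 0) t)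
    (hsymm : ∀ t, 0 ≤ t → (A t).IsSymm)
    (hmono : ∀ t, 0 ≤ t → (A' t + A t * A t - 1).PosSemidef)
    (hinit : θ₀ ≤ slAngle (r⁻¹ • A 0)) {t : ℝ} (ht : 0 ≤ t) :
    (d : ℝ) * arctan (tanh (arctanh (r * tan (θ₀ / d)) + t) / r) ≤ slAngle (r⁻¹ • A t) := by
  have hd₁ : (1 : ℝ) ≤ d := by exact_mod_cast hd
  have hd₀ : (0 : ℝ) < d := by linarith
  have hangle₀ : 0 ≤ θ₀ / d :=
    div_nonneg ((by have := sub_nonneg.2 hd₁; positivity : (0 : ℝ) ≤ _).trans hθ₁) hd₀.le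
  have hangle : θ₀ / d < π / 2 := by rw [div_lt_iff₀ hd₀]; linarith
  have htan : 0 ≤ r * tan (θ₀ / d) :=
    mul_nonneg hr.le (tan_nonneg_of_nonneg_of_le_pi_div_two hangle₀ hangle.le)
  obtain ⟨w, hw₀, hw, hw_mono, hw_ge⟩ :=
    exists_monotone_riccati_solution_ge_tanh (by linarith) hrt
  have hθ₀ : d * arctan (w 0 / r) = θ₀ := by
    rw [hw₀, mul_div_cancel_left₀ _ hr.ne', arctan_tan (by linarith [pi_pos]) hangle,
      mul_div_cancel₀ _ hd₀.ne']
  calc _ ≤ d * arctan (w t / r) := by gcongr; exact hw_ge t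
    _ ≤ slAngle (r⁻¹ • A t) := by
      refine mul_arctan_le_slAngle_of_riccati hr hderiv hsymm hmono
        (fun s _ => (hw s).hasDerivWithinAt) (fun s _ => le_rfl) (fun s hs => ?_)
        (hθ₀.trans_le hinit) ht
      rw [← hθ₀] at hθ₁
      exact hθ₁.trans (by gcongr; exact hw_mono hs)

/-- If A : [0,∞) → Λ^d is a C¹ path of positive definite symmetric matrices with
Θ(A(0)/r) = θ₀ and Ȧ + A² ≥ Id, then Θ(A(t)/r) ≥ d·arctan(tanh(t₀+t)/r) for all t ≥ 0,
where t₀ := arctanh(r·tan(θ₀/d)). -/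
theorem slAngle_evolution_lower_bound (d : ℕ) (hd : 1 ≤ d) (r θ₀ : ℝ) (hr : 0 < r)
    (hθ₁ : ((d : ℝ) - 1) * π / 2 ≤ θ₀) (hθ₂ : θ₀ < d * π / 2)
    (hrt : r * tan (θ₀ / d) ≤ 1)
    (A A' : ℝ → Matrix (Fin d) (Fin d) ℝ)
    (hderiv : ∀ t, 0 ≤ t → ∀ i j, HasDerivAt (fun u => A u i j) (A' t i j) t)
    (hsymm : ∀ t, 0 ≤ t → (A t).IsSymm)
    (hpos : ∀ t, 0 ≤ t → (A t).PosDef)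
    (hmono : ∀ t, 0 ≤ t → (A' t + A t * A t - 1).PosSemidef)
    (hinit : slAngle (r⁻¹ • A 0) = θ₀) :
    ∀ t, 0 ≤ t →
      (d : ℝ) * Real.arctan (Real.tanh (arctanh (r * tan (θ₀ / d)) + t) / r)
        ≤ slAngle (r⁻¹ • A t) := by
  exact fun t ht => slAngle_evolution_lower_bound_general hd hr hθ₁ hθ₂ hrt
    (fun s hs i j => (hderiv s hs i j).hasDerivWithinAt) hsymm hmono hinit.ge ht
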